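/- arXiv:1509.03699 — 5 statements merged into one kernel-verified Lean document; each statement's English description precedes it below -/
import Mathlib

section
/- For every real number x with 0 < x < 1, the function f(p) = max( 1/(p·x + (1 − p)), (1 + x)/(p·x + 1) ) attains its minimum over p ∈ [0, 1], and the minimum value equals 1 + x − x². -/
/-- For every real `x` with `0 < x < 1`, the function
`f(p) = max (1/(p*x + (1-p))) ((1+x)/(p*x + 1))` attains its minimum over `p ∈ [0,1]`,
and the minimum value equals `1 + x - x^2`. -/
theorem stmt_0 (x : ℝ) (hx0 : 0 < x) (hx1 : x < 1) :
    IsLeast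
      ((fun p : ℝ => max (1 / (p * x + (1 - p))) ((1 + x) / (p * x + 1))) ''
        Set.Icc (0 : ℝ) 1)
      (1 + x - x ^ 2) := by
  have hc : 0 < 1 + x - x ^ 2 := by nlinarith
  have hc0 : 1 + x - x ^ 2 ≠ 0 := hc.ne'
  constructor
  · refine ⟨x / (1 + x - x ^ 2), ⟨by positivity, ?_⟩, ?_⟩
    · rw [div_le_one hc]; nlinarith
    · have h1 : x / (1 + x - x ^ 2) * x + (1 - x / (1 + x - x ^ 2)) = 1 / (1 + x - x ^ 2) := by
        field_simp
        ring
      have h2 : x / (1 + x - x ^ 2) * x + 1 = (1 + x) / (1 + x - x ^ 2) := by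
        field_simp
        ring
      have h3 : (1 + x) ≠ 0 := by positivity
      show max _ _ = _
      rw [h1, h2, one_div_one_div, div_div_cancel₀ h3, max_self]
  · rintro _ ⟨p, ⟨hp0, hp1⟩, rfl⟩
    show _ ≤ max _ _
    rcases le_total x (p * (1 + x - x ^ 2)) with h | h
    · apply le_max_of_le_left
      have hd : 0 < p * x + (1 - p) := by nlinarith
      rw [le_div_iff₀ hd]
      nlinarith [mul_le_mul_of_nonneg_right h (sub_nonneg.2 hx1.le)]
    · apply le_max_of_le_right
      have hd : 0 < p * x + 1 := by positivity
      rw [le_div_iff₀ hd]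
      nlinarith [mul_le_mul_of_nonneg_right h hx0.le]
end

section
/- For every real number x with 0 < x < 1 and every p ∈ [0, 1], one has max( 1/(p·x + (1 − p)), (1 + x)/(p·x + 1) ) ≥ 1 + x − x². -/
/-- For every real `x` with `0 < x < 1` and every `p ∈ [0,1]`,
`max (1/(p*x + (1-p))) ((1+x)/(p*x + 1)) ≥ 1 + x - x^2`. -/
theorem stmt_2 (x : ℝ) (hx0 : 0 < x) (hx1 : x < 1)
    (p : ℝ) (hp : p ∈ Set.Icc (0 : ℝ) 1) :
    1 + x - x ^ 2 ≤ max (1 / (p * x + (1 - p))) ((1 + x) / (p * x + 1)) := by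
  obtain ⟨h0, h1⟩ := hp
  have hd1 : 0 < p * x + (1 - p) := by
    have h2 : p * (1 - x) ≤ 1 * (1 - x) :=
      mul_le_mul_of_nonneg_right h1 (by linarith)
    linarith
  have hd2 : 0 < p * x + 1 := by positivity
  rcases le_total x (p * (1 + x - x ^ 2)) with h | h
  · apply le_max_of_le_left
    rw [le_div_iff₀ hd1]
    have := mul_le_mul_of_nonneg_right h (by linarith : 0 ≤ 1 - x)
    linarith
  · apply le_max_of_le_right
    rw [le_div_iff₀ hd2]
    have := mul_le_mul_of_nonneg_right h hx0.le
    linarith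
end

section
/- For every real number x with 0 < x < 1 and every p ∈ [0, 1] with p ≠ x/(1 + x − x²), one has max( 1/(p·x + (1 − p)), (1 + x)/(p·x + 1) ) > 1 + x − x²; that is, p* = x/(1 + x − x²) is the unique minimizer of f on [0, 1]. -/
/-- For every real `x` with `0 < x < 1` and every `p ∈ [0,1]` with
`p ≠ x / (1 + x - x^2)`, one has
`max (1/(p*x + (1-p))) ((1+x)/(p*x + 1)) > 1 + x - x^2`;
that is, `p* = x / (1 + x - x^2)` is the unique minimizer on `[0,1]`. -/
theorem stmt_3 (x : ℝ) (hx0 : 0 < x) (hx1 : x < 1)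
    (p : ℝ) (hp : p ∈ Set.Icc (0 : ℝ) 1) (hne : p ≠ x / (1 + x - x ^ 2)) :
    1 + x - x ^ 2 < max (1 / (p * x + (1 - p))) ((1 + x) / (p * x + 1)) := by
  obtain ⟨h0, h1⟩ := hp
  have hD : 0 < 1 + x - x ^ 2 := by nlinarith
  rcases lt_or_gt_of_ne hne with h | h
  · rw [lt_div_iff₀ hD] at h
    apply lt_max_of_lt_right
    have hpos : 0 < p * x + 1 := by positivity
    rw [lt_div_iff₀ hpos]
    have := mul_lt_mul_of_pos_left h hx0
    linarith
  · rw [div_lt_iff₀ hD] at h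
    apply lt_max_of_lt_left
    have hpos : 0 < p * x + (1 - p) := by nlinarith
    rw [lt_div_iff₀ hpos]
    have := mul_lt_mul_of_pos_left h (sub_pos.mpr hx1)
    linarith
end

section
/- For all real numbers a and b with 0 < a < b, the function g(p) = max( b/(p·a + (1 − p)·b), (a + b)/(p·a + b) ) attains its minimum over p ∈ [0, 1], and the minimum value equals 1 + a/b − (a/b)². -/
/-- For all reals `a`, `b` with `0 < a < b`, the function
`g(p) = max (b/(p*a + (1-p)*b)) ((a+b)/(p*a + b))` attains its minimum over `p ∈ [0,1]`,
and the minimum value equals `1 + a/b - (a/b)^2`. -/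
theorem stmt_4 (a b : ℝ) (ha : 0 < a) (hab : a < b) :
    IsLeast
      ((fun p : ℝ => max (b / (p * a + (1 - p) * b)) ((a + b) / (p * a + b))) ''
        Set.Icc (0 : ℝ) 1)
      (1 + a / b - (a / b) ^ 2) := by
  have hb : 0 < b := ha.trans hab
  have hD : 0 < a * b + b ^ 2 - a ^ 2 := by nlinarith [mul_pos ha hb]
  have hv : 1 + a / b - (a / b) ^ 2 = (a * b + b ^ 2 - a ^ 2) / b ^ 2 := by
    field_simp
    ring
  have hden : ∀ p : ℝ, 0 ≤ p → p ≤ 1 → 0 < p * a + (1 - p) * b := by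
    intro p h0 h1
    nlinarith [mul_nonneg (sub_nonneg.2 h1) (sub_pos.2 hab).le]
  rw [hv]
  constructor
  · have h0 : 0 ≤ a * b / (a * b + b ^ 2 - a ^ 2) := by positivity
    have h1 : a * b / (a * b + b ^ 2 - a ^ 2) ≤ 1 := by
      rw [div_le_one hD]
      nlinarith
    refine ⟨a * b / (a * b + b ^ 2 - a ^ 2), ⟨h0, h1⟩, ?_⟩
    have hd := hden _ h0 h1
    have hp : a * b / (a * b + b ^ 2 - a ^ 2) * (a * b + b ^ 2 - a ^ 2) = a * b :=
      div_mul_cancel₀ _ hD.ne'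
    generalize a * b / (a * b + b ^ 2 - a ^ 2) = p at *
    have hd2 : 0 < p * a + b := by positivity
    have e1 : b / (p * a + (1 - p) * b) = (a * b + b ^ 2 - a ^ 2) / b ^ 2 := by
      rw [div_eq_div_iff hd.ne' (by positivity)]
      linear_combination (b - a) * hp
    have e2 : (a + b) / (p * a + b) = (a * b + b ^ 2 - a ^ 2) / b ^ 2 := by
      rw [div_eq_div_iff hd2.ne' (by positivity)]
      linear_combination (-a) * hp
    simp only [e1, e2, max_self]
  · rintro _ ⟨p, ⟨h0, h1⟩, rfl⟩
    have hd := hden p h0 h1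
    have hd2 : 0 < p * a + b := by positivity
    rcases le_total (a * b) (p * (a * b + b ^ 2 - a ^ 2)) with h | h
    · apply le_max_of_le_left
      rw [div_le_div_iff₀ (by positivity) hd]
      linarith [mul_le_mul_of_nonneg_left h (sub_pos.2 hab).le]
    · apply le_max_of_le_right
      rw [div_le_div_iff₀ (by positivity) hd2]
      linarith [mul_le_mul_of_nonneg_left h ha.le]
end

section
/- For all real numbers v_on, v_off, v_g with 0 < v_on < v_off < v_g, setting x = v_on/v_off and y = v_off/v_g, the probabilities p = x/(1 + x − x²) and p' = y/(1 + y − y²) both lie in the open interval (0, 1), and they achieve min_{q ∈ [0,1]} max( 1/(q·x + (1 − q)), (1 + x)/(q·x + 1) ) = 1 + x − x² and min_{q ∈ [0,1]} max( 1/(q·y + (1 − q)), (1 + y)/(q·y + 1) ) = 1 + y − y² respectively. -/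
theorem aux_13 (x : ℝ) (h0 : 0 < x) (h1 : x < 1) :
    x / (1 + x - x ^ 2) ∈ Set.Ioo (0 : ℝ) 1 ∧
    IsLeast
      ((fun q : ℝ => max (1 / (q * x + (1 - q))) ((1 + x) / (q * x + 1))) ''
        Set.Icc (0 : ℝ) 1) (1 + x - x ^ 2) ∧
    (fun q : ℝ => max (1 / (q * x + (1 - q))) ((1 + x) / (q * x + 1)))
        (x / (1 + x - x ^ 2)) = 1 + x - x ^ 2 := by
  have hD : 0 < 1 + x - x ^ 2 := by nlinarith
  have hp : x / (1 + x - x ^ 2) ∈ Set.Ioo (0 : ℝ) 1 := by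
    refine ⟨div_pos h0 hD, ?_⟩
    rw [div_lt_one hD]
    nlinarith
  have hv : (fun q : ℝ => max (1 / (q * x + (1 - q))) ((1 + x) / (q * x + 1)))
        (x / (1 + x - x ^ 2)) = 1 + x - x ^ 2 := by
    have e1 : x / (1 + x - x ^ 2) * x + (1 - x / (1 + x - x ^ 2)) = 1 / (1 + x - x ^ 2) := by
      rw [eq_div_iff hD.ne', add_mul, sub_mul, mul_right_comm, div_mul_cancel₀ _ hD.ne']
      ring
    have e2 : x / (1 + x - x ^ 2) * x + 1 = (1 + x) / (1 + x - x ^ 2) := by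
      rw [eq_div_iff hD.ne', add_mul, mul_right_comm, div_mul_cancel₀ _ hD.ne']
      ring
    have hx1 : (1 + x) ≠ 0 := by positivity
    simp only [e1, e2]
    rw [div_div_cancel₀ hx1, one_div_one_div, max_self]
  refine ⟨hp, ⟨⟨_, ⟨hp.1.le, hp.2.le⟩, hv⟩, ?_⟩, hv⟩
  rintro _ ⟨q, ⟨hq0, hq1⟩, rfl⟩
  rcases le_total (x / (1 + x - x ^ 2)) q with h | h
  · refine le_max_of_le_left ?_
    rw [div_le_iff₀ hD] at h
    have : 0 < q * x + (1 - q) := by nlinarith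
    rw [le_div_iff₀ this]
    nlinarith [mul_le_mul_of_nonneg_right h (sub_pos.2 h1).le]
  · refine le_max_of_le_right ?_
    rw [le_div_iff₀ hD] at h
    have : 0 < q * x + 1 := by positivity
    rw [le_div_iff₀ this]
    nlinarith [mul_le_mul_of_nonneg_right h h0.le]

/-- For `0 < v_on < v_off < v_g`, set `x = v_on/v_off` and `y = v_off/v_g`.
Then `p = x/(1 + x - x^2)` and `p' = y/(1 + y - y^2)` both lie in `(0,1)`, and they
realize `min_{q ∈ [0,1]} max (1/(q*x + (1-q))) ((1+x)/(q*x + 1)) = 1 + x - x^2`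
(respectively with `y`). -/
theorem stmt_13 (von voff vg : ℝ) (h0 : 0 < von) (h1 : von < voff) (h2 : voff < vg)
    (x y : ℝ) (hx : x = von / voff) (hy : y = voff / vg) :
    x / (1 + x - x ^ 2) ∈ Set.Ioo (0 : ℝ) 1 ∧
    y / (1 + y - y ^ 2) ∈ Set.Ioo (0 : ℝ) 1 ∧
    IsLeast
      ((fun q : ℝ => max (1 / (q * x + (1 - q))) ((1 + x) / (q * x + 1))) ''
        Set.Icc (0 : ℝ) 1) (1 + x - x ^ 2) ∧
    (fun q : ℝ => max (1 / (q * x + (1 - q))) ((1 + x) / (q * x + 1)))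
        (x / (1 + x - x ^ 2)) = 1 + x - x ^ 2 ∧
    IsLeast
      ((fun q : ℝ => max (1 / (q * y + (1 - q))) ((1 + y) / (q * y + 1))) ''
        Set.Icc (0 : ℝ) 1) (1 + y - y ^ 2) ∧
    (fun q : ℝ => max (1 / (q * y + (1 - q))) ((1 + y) / (q * y + 1)))
        (y / (1 + y - y ^ 2)) = 1 + y - y ^ 2 := by
  have hvoff : 0 < voff := h0.trans h1
  have hvg : 0 < vg := hvoff.trans h2
  obtain ⟨a, b, c⟩ := aux_13 x (hx ▸ div_pos h0 hvoff) (hx ▸ (div_lt_one hvoff).2 h1)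
  obtain ⟨d, e, f⟩ := aux_13 y (hy ▸ div_pos hvoff hvg) (hy ▸ (div_lt_one hvg).2 h2)
  exact ⟨a, d, b, c, e, f⟩
end
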